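/- Let N be a finite ground set, let f : 2^N → ℝ be non-negative, monotone and submodular, let k ≥ 1 be an integer, and let ε ∈ (0, 1). Let S, O ⊆ N with |O| ≤ k, and suppose that for every e ∈ N \ S the marginal gain satisfies Δ(e|S) < ε·f(O)/k. Then f(S) ≥ (1 − ε)·f(O). -/

import Mathlib

/-- A set function `f` on finite subsets of `α` is submodular if for all `A ⊆ B` and
`x ∉ B`, the marginal gain of `x` to `A` is at least the marginal gain of `x` to `B`. -/
def Submodular {α : Type*} [DecidableEq α] (f : Finset α → ℝ) : Prop :=
  ∀ A B : Finset α, A ⊆ B → ∀ x ∉ B, f (insert x A) - f A ≥ f (insert x B) - f B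

/-- The marginal gain `Δ(x|S) = f(S ∪ {x}) - f(S)` of adding the element `x` to the set `S`. It is
defined for every `x`, with value `0` when `x ∈ S`. -/
def marginalGain {α : Type*} [DecidableEq α] (f : Finset α → ℝ) (x : α) (S : Finset α) : ℝ :=
  f (insert x S) - f S

namespace Submodular

variable {α : Type*} [DecidableEq α] {f : Finset α → ℝ}

theorem marginalGain_anti (hf : Submodular f) {A B : Finset α} (hAB : A ⊆ B) {x : α}
    (hx : x ∉ B) : marginalGain f x B ≤ marginalGain f x A :=
  hf A B hAB x hx

theorem union_sub_le_sum_marginalGain (hf : Submodular f) (S T : Finset α) :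
    f (S ∪ T) - f S ≤ ∑ x ∈ T \ S, marginalGain f x S := by
  induction T using Finset.induction_on with
  | empty => simp
  | insert a T haT ih =>
    by_cases haS : a ∈ S
    · rwa [Finset.union_insert, Finset.insert_eq_of_mem (Finset.mem_union_left T haS),
        Finset.insert_sdiff_of_mem T haS]
    · have ha_union : a ∉ S ∪ T := by simp [haS, haT]
      have ha_sdiff : a ∉ T \ S := by simp [haT]
      rw [Finset.union_insert, Finset.insert_sdiff_of_notMem T haS, Finset.sum_insert ha_sdiff]
      calc f (insert a (S ∪ T)) - f S
          = marginalGain f a (S ∪ T) + (f (S ∪ T) - f S) := (sub_add_sub_cancel _ _ _).symm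
        _ ≤ marginalGain f a S + ∑ x ∈ T \ S, marginalGain f x S :=
          add_le_add (hf.marginalGain_anti Finset.subset_union_left ha_union) ih

theorem union_sub_le_card_sdiff_mul (hf : Submodular f) {S T : Finset α} {c : ℝ}
    (hc : ∀ x ∈ T \ S, marginalGain f x S ≤ c) : f (S ∪ T) - f S ≤ (T \ S).card * c :=
  calc f (S ∪ T) - f S ≤ ∑ x ∈ T \ S, marginalGain f x S := hf.union_sub_le_sum_marginalGain S T
    _ ≤ (T \ S).card • c := Finset.sum_le_card_nsmul _ _ _ hc
    _ = (T \ S).card * c := nsmul_eq_mul _ _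

end Submodular

/-- Let `f` be non-negative, monotone and submodular, `k ≥ 1`,
`ε ∈ (0,1)`, and `S, O` with `|O| ≤ k`. If every `e ∈ N \ S` has marginal gain
`Δ(e|S) < ε·f(O)/k`, then `f(S) ≥ (1 − ε)·f(O)`. -/
theorem stmt8 {α : Type*} [DecidableEq α] (f : Finset α → ℝ)
    (hnn : ∀ A : Finset α, 0 ≤ f A)
    (hmono : ∀ A B : Finset α, A ⊆ B → f A ≤ f B)
    (hsub : Submodular f)
    (k : ℕ) (hk : 1 ≤ k) (ε : ℝ) (hε : 0 < ε) (hε1 : ε < 1)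
    (S O : Finset α) (hO : O.card ≤ k)
    (h : ∀ e : α, e ∉ S → f (insert e S) - f S < ε * f O / k) :
    (1 - ε) * f O ≤ f S := by
  have hk_ne : (k : ℝ) ≠ 0 := Nat.cast_ne_zero.mpr (Nat.one_le_iff_ne_zero.mp hk)
  have hthreshold : 0 ≤ ε * f O / k := div_nonneg (mul_nonneg hε.le (hnn O)) k.cast_nonneg
  have hcard : (O \ S).card ≤ k := (Finset.card_le_card Finset.sdiff_subset).trans hO
  have hgain : f (S ∪ O) - f S ≤ ε * f O :=
    calc f (S ∪ O) - f S ≤ (O \ S).card * (ε * f O / k) :=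
          hsub.union_sub_le_card_sdiff_mul fun e he => (h e (Finset.mem_sdiff.mp he).2).le
      _ ≤ k * (ε * f O / k) := by gcongr
      _ = ε * f O := mul_div_cancel₀ _ hk_ne
  have hunion : f O ≤ f (S ∪ O) := hmono O (S ∪ O) Finset.subset_union_right
  linarith
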